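/- Let H be a finite-dimensional semisimple Hopf algebra over a field of characteristic zero with Haar integral ℓ. The invariants of the right coadjoint action of H on H*, defined by α ◁*_ad h = ⟨α₍₁₎ S(α₍₃₎), h⟩ α₍₂₎, are exactly the character algebra C(H) = {α ∈ H* : Δ(α) = Δ^op(α)}, and the map π_ad: H* → H*, α ↦ α ◁*_ad ℓ is a projector onto C(H). -/

import Mathlib

/-!
Once `S² = id`, the coadjoint invariants are the trace functionals by a direct computation, so the
substance is the Larson–Radford theorem that a Haar integral `ℓ` in characteristic zero forces
`S² = id`.

Everything rests on the functional `ψ(h) = Tr(x ↦ h S²(x))`: it is an integral of `H*` with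
`ψ(ℓ) = 1`, and it satisfies `ψ(ab) = ψ(b S²(a))`. Comparing `ψ` with its translates shows that `S⁴`
is conjugation by a group-like element, so `S` has finite order. Over an algebraically closed field
`H` is a product of matrix algebras, on which `S²` is conjugation by some `u`, and `ψ` becomes a sum
of products of block traces. Up to scalars the blocks of `u` and `u⁻¹` have roots of unity as
eigenvalues, inverse to each other, so `ψ(1)` is a sum of squared absolute values. If it vanished,
all block traces of `u` would vanish and so would `ψ(ℓ) = 1`. Hence `ψ(1) = Tr S² ≠ 0`, which makes
`ψ` two-sided and gives `S⁴ = 1`. Finally, contracting the comultiplication with the regular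
character gives `dim H` times an idempotent that commutes with `S²`, and the trace of its product
with `S²` shows that `dim H` divides `Tr S²`. An involution of a space of dimension `n` that has a
fixed vector and whose trace is a nonzero multiple of `n` is the identity.
-/

open TensorProduct LinearMap

noncomputable section

variable (F H : Type*) [Field F] [Ring H] [HopfAlgebra F H]

/-- The left adjoint action of `H` on itself, `adL h : k ↦ h₍₁₎ * k * S(h₍₂₎)`, packaged as a
linear map `H →ₗ[F] End(H)`. -/
def adL : H →ₗ[F] Module.End F H :=
  (TensorProduct.lift ((LinearMap.llcomp F H H H).compl₁₂ (LinearMap.mul F H)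
      ((LinearMap.mul F H).flip ∘ₗ HopfAlgebra.antipode (R := F)))) ∘ₗ
    Coalgebra.comul (R := F)

/-- The right coadjoint action of `H` on `H*`:
`(α ◁*_ad h)(k) = α(h₍₁₎ * k * S(h₍₂₎))`, i.e. `α ◁*_ad h = ⟨α₍₁₎ S(α₍₃₎), h⟩ α₍₂₎`. -/
def rcoad (α : Module.Dual F H) (h : H) : Module.Dual F H :=
  α ∘ₗ adL F H h

open Coalgebra HopfAlgebra

attribute [fun_prop] IsLinearMap

section IsLinearMap

variable {R M N P ι : Type*} [CommSemiring R] [AddCommMonoid M] [Module R M]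
  [AddCommMonoid N] [Module R N] [AddCommMonoid P] [Module R P]

@[fun_prop]
theorem isLinearMap_id : IsLinearMap R fun x : M => x :=
  LinearMap.id.isLinear

@[fun_prop]
theorem isLinearMap_comp {f : N → P} {g : M → N} (hf : IsLinearMap R f)
    (hg : IsLinearMap R g) : IsLinearMap R fun x => f (g x) :=
  (hf.mk' f ∘ₗ hg.mk' g).isLinear

@[fun_prop]
theorem isLinearMap_apply (f : N →ₗ[R] P) {g : M → N} (hg : IsLinearMap R g) :
    IsLinearMap R fun x => f (g x) :=
  isLinearMap_comp f.isLinear hg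

@[fun_prop]
theorem isLinearMap_smul_const (n : N) {g : M → R} (hg : IsLinearMap R g) :
    IsLinearMap R fun x => g x • n :=
  isLinearMap_apply (toSpanSingleton R N n) hg

@[fun_prop]
theorem isLinearMap_const_smul (c : R) {g : M → N} (hg : IsLinearMap R g) :
    IsLinearMap R fun x => c • g x :=
  isLinearMap_apply (lsmul R N c) hg

@[fun_prop]
theorem isLinearMap_tmul_const (p : P) {g : M → N} (hg : IsLinearMap R g) :
    IsLinearMap R fun x => g x ⊗ₜ[R] p :=
  isLinearMap_comp (f := fun n => n ⊗ₜ[R] p) ((mk R N P).flip p).isLinear hg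

@[fun_prop]
theorem isLinearMap_const_tmul (p : P) {g : M → N} (hg : IsLinearMap R g) :
    IsLinearMap R fun x => p ⊗ₜ[R] g x :=
  isLinearMap_apply (mk R P N p) hg

@[fun_prop]
theorem isLinearMap_sum (s : Finset ι) {g : ι → M → N} (hg : ∀ i, IsLinearMap R (g i)) :
    IsLinearMap R fun x => ∑ i ∈ s, g i x := by
  constructor
  · simp [fun i => (hg i).map_add, Finset.sum_add_distrib]
  · simp [fun i => (hg i).map_smul, Finset.smul_sum]

variable {A : Type*} [Semiring A] [Algebra R A]

@[fun_prop]
theorem isLinearMap_const_mul (a : A) {g : M → A} (hg : IsLinearMap R g) :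
    IsLinearMap R fun x => a * g x :=
  isLinearMap_apply (mulLeft R a) hg

@[fun_prop]
theorem isLinearMap_mul_const (a : A) {g : M → A} (hg : IsLinearMap R g) :
    IsLinearMap R fun x => g x * a :=
  isLinearMap_apply (mulRight R a) hg

end IsLinearMap

section Sweedler

variable {R C M N ι : Type*} [CommSemiring R] [AddCommMonoid C] [Module R C] [Coalgebra R C]
  [AddCommMonoid M] [Module R M] [AddCommMonoid N] [Module R N]

variable (R) in
/-- The Sweedler sum `B(h₍₁₎, h₍₂₎)`. The argument `B` is a bare function, so that it can be written
as a lambda term; the sum is independent of the chosen representation of `Δ h` as soon as `B` is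
bilinear, which the lemmas below ask `fun_prop` to check. -/
def sweedler (h : C) (B : C → C → M) : M :=
  ∑ i ∈ (ℛ R h).index, B ((ℛ R h).left i) ((ℛ R h).right i)

theorem sweedler_tmul (h : C) : sweedler R h (fun x y => x ⊗ₜ[R] y) = comul h :=
  (ℛ R h).eq

theorem map_sweedler (f : M →ₗ[R] N) (h : C) (B : C → C → M) :
    f (sweedler R h B) = sweedler R h fun x y => f (B x y) :=
  map_sum f _ _

theorem sweedler_linearMap_tmul (L : C ⊗[R] C →ₗ[R] M) (h : C) :
    sweedler R h (fun x y => L (x ⊗ₜ y)) = L (comul h) := by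
  rw [← sweedler_tmul, map_sweedler]

theorem smul_sweedler (c : R) (h : C) (B : C → C → M) :
    c • sweedler R h B = sweedler R h fun x y => c • B x y :=
  Finset.smul_sum

theorem sweedler_smul (h : C) (B : C → C → R) (m : M) :
    sweedler R h B • m = sweedler R h fun x y => B x y • m :=
  Finset.sum_smul

theorem mul_sweedler {A : Type*} [NonUnitalNonAssocSemiring A] (a : A) (h : C) (B : C → C → A) :
    a * sweedler R h B = sweedler R h fun x y => a * B x y :=
  Finset.mul_sum ..

theorem sweedler_mul_right {A : Type*} [NonUnitalNonAssocSemiring A] (a : A) (h : C)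
    (B : C → C → A) : sweedler R h B * a = sweedler R h fun x y => B x y * a :=
  Finset.sum_mul ..

omit [Module R M] in
theorem sum_sweedler (s : Finset ι) (h : C) (B : ι → C → C → M) :
    ∑ i ∈ s, sweedler R h (B i) = sweedler R h fun x y => ∑ i ∈ s, B i x y :=
  Finset.sum_comm

omit [Module R M] in
theorem sweedler_comm (h k : C) (B : C → C → C → C → M) :
    sweedler R h (fun x y => sweedler R k fun z w => B x y z w) =
      sweedler R k fun z w => sweedler R h fun x y => B x y z w :=
  Finset.sum_comm

@[fun_prop]
theorem isLinearMap_sweedler_right (h : C) {B : N → C → C → M}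
    (hB : ∀ x y, IsLinearMap R fun n => B n x y) :
    IsLinearMap R fun n => sweedler R h (B n) :=
  isLinearMap_sum _ fun _ => hB _ _

theorem sweedler_counit_left (f : C → M) (h : C) (hf : IsLinearMap R f := by fun_prop) :
    sweedler R h (fun x y => counit (R := R) x • f y) = f h := by
  conv_rhs => rw [← hf.mk'_apply, ← sum_counit_smul (ℛ R h)]
  simp [sweedler]

theorem sweedler_counit_right (f : C → M) (h : C) (hf : IsLinearMap R f := by fun_prop) :
    sweedler R h (fun x y => counit (R := R) y • f x) = f h := by
  have h_lift := congrArg (lift ((lsmul R M).flip ∘ₗ hf.mk' f))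
    (sum_tmul_counit_eq (R := R) (ℛ R h))
  simpa only [sweedler, map_sum, lift.tmul, comp_apply, flip_apply, lsmul_apply, one_smul,
    IsLinearMap.mk'_apply] using h_lift

omit [Coalgebra R C] in
theorem exists_linearMap_tmul {B : C → C → M} (hB₁ : ∀ y, IsLinearMap R fun x => B x y)
    (hB₂ : ∀ x, IsLinearMap R fun y => B x y) :
    ∃ L : C ⊗[R] C →ₗ[R] M, (fun x y => L (x ⊗ₜ y)) = B :=
  ⟨lift <| mk₂ R B (fun _ _ y => (hB₁ y).map_add _ _) (fun _ _ y => (hB₁ y).map_smul _ _)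
    (fun x => (hB₂ x).map_add) (fun _ x => (hB₂ x).map_smul _), rfl⟩

theorem sweedler_eq_sum_of_comul_eq {h : C} (s : Finset ι) (l r : ι → C)
    (hlr : comul h = ∑ i ∈ s, l i ⊗ₜ[R] r i) (B : C → C → M)
    (hB₁ : ∀ y, IsLinearMap R fun x => B x y := by fun_prop)
    (hB₂ : ∀ x, IsLinearMap R fun y => B x y := by fun_prop) :
    sweedler R h B = ∑ i ∈ s, B (l i) (r i) := by
  obtain ⟨L, rfl⟩ := exists_linearMap_tmul hB₁ hB₂
  rw [sweedler_linearMap_tmul, hlr, map_sum]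

@[fun_prop]
theorem isLinearMap_sweedler_left {B : C → C → M} {g : N → C} (hg : IsLinearMap R g)
    (hB₁ : ∀ y, IsLinearMap R fun x => B x y) (hB₂ : ∀ x, IsLinearMap R fun y => B x y) :
    IsLinearMap R fun n => sweedler R (g n) B := by
  obtain ⟨L, rfl⟩ := exists_linearMap_tmul hB₁ hB₂
  simp_rw [sweedler_linearMap_tmul]
  fun_prop

theorem sweedler_coassoc (T : C → C → C → M) (h : C)
    (hT₁ : ∀ y z, IsLinearMap R fun x => T x y z := by fun_prop)
    (hT₂ : ∀ x z, IsLinearMap R fun y => T x y z := by fun_prop)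
    (hT₃ : ∀ x y, IsLinearMap R fun z => T x y z := by fun_prop) :
    sweedler R h (fun x y => sweedler R x fun x₁ x₂ => T x₁ x₂ y) =
      sweedler R h fun x y => sweedler R y fun y₁ y₂ => T x y₁ y₂ := by
  let T' : C →ₗ[R] C →ₗ[R] C →ₗ[R] M := mk₂ R (fun x y => (hT₃ x y).mk' (T x y))
    (fun _ _ _ => LinearMap.ext fun _ => (hT₁ _ _).map_add _ _)
    (fun _ _ _ => LinearMap.ext fun _ => (hT₁ _ _).map_smul _ _)
    (fun _ _ _ => LinearMap.ext fun _ => (hT₂ _ _).map_add _ _)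
    (fun _ _ _ => LinearMap.ext fun _ => (hT₂ _ _).map_smul _ _)
  simpa [sweedler, T'] using
    congrArg (lift (lift T') ∘ₗ (TensorProduct.assoc R C C C).symm.toLinearMap)
      (sum_tmul_tmul_eq (ℛ R h) (fun _ => ℛ R _) (fun _ => ℛ R _))

theorem sweedler_cancel_left (m : C → C → N) (n : N)
    (hm : ∀ x, sweedler R x m = counit (R := R) x • n) (B : N → C → M) (h : C)
    (hm₁ : ∀ y, IsLinearMap R fun x => m x y := by fun_prop)
    (hm₂ : ∀ x, IsLinearMap R fun y => m x y := by fun_prop)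
    (hB₁ : ∀ y, IsLinearMap R fun x => B x y := by fun_prop)
    (hB₂ : ∀ x, IsLinearMap R fun y => B x y := by fun_prop) :
    sweedler R h (fun x y => sweedler R y fun y₁ y₂ => B (m x y₁) y₂) = B n h :=
  calc sweedler R h (fun x y => sweedler R y fun y₁ y₂ => B (m x y₁) y₂)
      = sweedler R h fun x y => sweedler R x fun x₁ x₂ => B (m x₁ x₂) y :=
        (sweedler_coassoc _ h).symm
    _ = sweedler R h fun x y => counit (R := R) x • B n y :=
        congrArg (sweedler R h) <| funext₂ fun x y =>
          (map_sweedler ((hB₁ y).mk' _) x m).symm.trans <| by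
            rw [hm, map_smul, IsLinearMap.mk'_apply]
    _ = B n h := sweedler_counit_left _ h

theorem sweedler_cancel_right (m : C → C → N) (n : N)
    (hm : ∀ x, sweedler R x m = counit (R := R) x • n) (B : C → N → M) (h : C)
    (hm₁ : ∀ y, IsLinearMap R fun x => m x y := by fun_prop)
    (hm₂ : ∀ x, IsLinearMap R fun y => m x y := by fun_prop)
    (hB₁ : ∀ y, IsLinearMap R fun x => B x y := by fun_prop)
    (hB₂ : ∀ x, IsLinearMap R fun y => B x y := by fun_prop) :
    sweedler R h (fun x y => sweedler R x fun x₁ x₂ => B x₁ (m x₂ y)) = B h n :=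
  calc sweedler R h (fun x y => sweedler R x fun x₁ x₂ => B x₁ (m x₂ y))
      = sweedler R h fun x y => sweedler R y fun y₁ y₂ => B x (m y₁ y₂) :=
        sweedler_coassoc _ h
    _ = sweedler R h fun x y => counit (R := R) y • B x n :=
        congrArg (sweedler R h) <| funext₂ fun x y =>
          (map_sweedler ((hB₂ x).mk' _) y m).symm.trans <| by
            rw [hm, map_smul, IsLinearMap.mk'_apply]
    _ = B h n := sweedler_counit_right _ h

end Sweedler

section Antipode

variable {R A M : Type*} [CommSemiring R] [Semiring A] [HopfAlgebra R A] [AddCommMonoid M]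
  [Module R M]

local notation "S" => antipode R (A := A)
local notation "ε" => counit (R := R) (A := A)

theorem sweedler_one (B : A → A → M)
    (hB₁ : ∀ y, IsLinearMap R fun x => B x y := by fun_prop)
    (hB₂ : ∀ x, IsLinearMap R fun y => B x y := by fun_prop) :
    sweedler R 1 B = B 1 1 := by
  obtain ⟨L, rfl⟩ := exists_linearMap_tmul hB₁ hB₂
  rw [sweedler_linearMap_tmul, Bialgebra.comul_one, Algebra.TensorProduct.one_def]

theorem sweedler_mul (a b : A) (B : A → A → M)
    (hB₁ : ∀ y, IsLinearMap R fun x => B x y := by fun_prop)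
    (hB₂ : ∀ x, IsLinearMap R fun y => B x y := by fun_prop) :
    sweedler R (a * b) B =
      sweedler R a fun x y => sweedler R b fun z w => B (x * z) (y * w) := by
  have h_comul : comul (a * b) = ∑ p ∈ (ℛ R a).index ×ˢ (ℛ R b).index,
      ((ℛ R a).left p.1 * (ℛ R b).left p.2) ⊗ₜ[R]
        ((ℛ R a).right p.1 * (ℛ R b).right p.2) := by
    simp_rw [Bialgebra.comul_mul, ← (ℛ R a).eq, ← (ℛ R b).eq, Finset.sum_mul_sum,
      Finset.sum_product, Algebra.TensorProduct.tmul_mul_tmul]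
  rw [sweedler_eq_sum_of_comul_eq _ _ _ h_comul B, Finset.sum_product]
  rfl

theorem sweedler_mul_antipode (h : A) : sweedler R h (fun x y => x * S y) = ε h • 1 :=
  sum_mul_antipode_eq_smul (ℛ R h)

theorem sweedler_antipode_mul (h : A) : sweedler R h (fun x y => S x * y) = ε h • 1 :=
  sum_antipode_mul_eq_smul (ℛ R h)

theorem sweedler_mul_antipode_cancel_left (B : A → A → M) (h : A)
    (hB₁ : ∀ y, IsLinearMap R fun x => B x y := by fun_prop)
    (hB₂ : ∀ x, IsLinearMap R fun y => B x y := by fun_prop) :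
    sweedler R h (fun x y => sweedler R y fun y₁ y₂ => B (x * S y₁) y₂) = B 1 h :=
  sweedler_cancel_left (fun x y => x * S y) 1 sweedler_mul_antipode B h

theorem sweedler_antipode_mul_cancel_left (B : A → A → M) (h : A)
    (hB₁ : ∀ y, IsLinearMap R fun x => B x y := by fun_prop)
    (hB₂ : ∀ x, IsLinearMap R fun y => B x y := by fun_prop) :
    sweedler R h (fun x y => sweedler R y fun y₁ y₂ => B (S x * y₁) y₂) = B 1 h :=
  sweedler_cancel_left (fun x y => S x * y) 1 sweedler_antipode_mul B h

theorem sweedler_mul_antipode_cancel_right (B : A → A → M) (h : A)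
    (hB₁ : ∀ y, IsLinearMap R fun x => B x y := by fun_prop)
    (hB₂ : ∀ x, IsLinearMap R fun y => B x y := by fun_prop) :
    sweedler R h (fun x y => sweedler R x fun x₁ x₂ => B x₁ (x₂ * S y)) = B h 1 :=
  sweedler_cancel_right (fun x y => x * S y) 1 sweedler_mul_antipode B h

theorem sweedler_antipode_tmul_mul_comul (h : A) :
    sweedler R h (fun x y => sweedler R x (fun x₁ x₂ => S x₂ ⊗ₜ[R] S x₁) * comul y) =
      ε h • 1 := by
  calc sweedler R h (fun x y => sweedler R x (fun x₁ x₂ => S x₂ ⊗ₜ[R] S x₁) * comul y)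
      = sweedler R h fun x y => sweedler R x fun x₁ x₂ => sweedler R y fun y₁ y₂ =>
          (S x₂ * y₁) ⊗ₜ[R] (S x₁ * y₂) := by
        simp only [← sweedler_tmul, sweedler_mul_right]
        simp only [mul_sweedler, Algebra.TensorProduct.tmul_mul_tmul]
    _ = sweedler R h fun x y => sweedler R y fun y₁ y₂ => sweedler R y₂ fun z w =>
          (S y₁ * z) ⊗ₜ[R] (S x * w) :=
        sweedler_coassoc _ h
    _ = sweedler R h fun x y => 1 ⊗ₜ[R] (S x * y) :=
        congrArg (sweedler R h) <| funext₂ fun x y =>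
          sweedler_antipode_mul_cancel_left (fun z w => z ⊗ₜ[R] (S x * w)) y
    _ = 1 ⊗ₜ[R] (ε h • (1 : A)) := by
        rw [← sweedler_antipode_mul]
        exact (map_sweedler (mk R A A 1) h _).symm
    _ = ε h • 1 := by rw [tmul_smul, Algebra.TensorProduct.one_def]

/-- `h ↦ S(h₍₂₎) ⊗ S(h₍₁₎)` is a left convolution inverse of `Δ`, and `Δ ∘ S` is a right one. -/
theorem comul_antipode (h : A) :
    comul (R := R) (S h) = sweedler R h fun x y => S y ⊗ₜ[R] S x := by
  let G : A →ₗ[R] A ⊗[R] A := IsLinearMap.mk' (fun h => sweedler R h fun x y => S y ⊗ₜ[R] S x)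
    (by fun_prop)
  have h_inv : WithConv.toConv G = WithConv.toConv (comul ∘ₗ S) := by
    refine left_inv_eq_right_inv (a := WithConv.toConv comul) ?_ LinearMap.comul_right_inv
    ext h
    rw [(ℛ R h).convMul_apply]
    exact (sweedler_antipode_tmul_mul_comul h).trans (Algebra.algebraMap_eq_smul_one _).symm
  exact (congrArg (fun g : WithConv (A →ₗ[R] A ⊗[R] A) => g.ofConv h) h_inv).symm

theorem sweedler_antipode (h : A) (B : A → A → M)
    (hB₁ : ∀ y, IsLinearMap R fun x => B x y := by fun_prop)
    (hB₂ : ∀ x, IsLinearMap R fun y => B x y := by fun_prop) :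
    sweedler R (S h) B = sweedler R h fun x y => B (S y) (S x) :=
  sweedler_eq_sum_of_comul_eq _ _ _ (comul_antipode h) B

theorem sweedler_antipode_antipode (h : A) (B : A → A → M)
    (hB₁ : ∀ y, IsLinearMap R fun x => B x y := by fun_prop)
    (hB₂ : ∀ x, IsLinearMap R fun y => B x y := by fun_prop) :
    sweedler R (S (S h)) B = sweedler R h fun x y => B (S (S x)) (S (S y)) :=
  (sweedler_antipode (S h) B).trans (sweedler_antipode h _)

end Antipode

section Contraction

variable {R C : Type*} [CommSemiring R] [AddCommMonoid C] [Module R C] [Coalgebra R C]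

/-- The left contraction `h ↦ f(h₍₁₎) h₍₂₎`, i.e. the right action of `f ∈ C*` on `C`. -/
def contractFst (f : C →ₗ[R] R) : C →ₗ[R] C :=
  IsLinearMap.mk' (fun h => sweedler R h fun x y => f x • y) (by fun_prop)

/-- The right contraction `h ↦ f(h₍₂₎) h₍₁₎`, i.e. the left action of `f ∈ C*` on `C`. -/
def contractSnd (f : C →ₗ[R] R) : C →ₗ[R] C :=
  IsLinearMap.mk' (fun h => sweedler R h fun x y => f y • x) (by fun_prop)

theorem contractFst_apply (f : C →ₗ[R] R) (h : C) :
    contractFst f h = sweedler R h fun x y => f x • y :=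
  rfl

theorem contractSnd_apply (f : C →ₗ[R] R) (h : C) :
    contractSnd f h = sweedler R h fun x y => f y • x :=
  rfl

theorem apply_contractSnd (f p : C →ₗ[R] R) (h : C) :
    p (contractSnd f h) = f (contractFst p h) := by
  simp only [contractFst_apply, contractSnd_apply, map_sweedler, map_smul, smul_eq_mul,
    mul_comm]

end Contraction

section Basis

variable {R M N ι κ : Type*} [CommSemiring R] [AddCommMonoid M] [Module R M] [AddCommMonoid N]
  [Module R N] [Fintype ι]

theorem sum_repr_smul_apply_basis (b : Module.Basis ι R M) (g : M → N) (w : M)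
    (hg : IsLinearMap R g := by fun_prop) : ∑ k, b.repr w k • g (b k) = g w := by
  calc ∑ k, b.repr w k • g (b k) = hg.mk' g (∑ k, b.repr w k • b k) := by
        simp only [map_sum, map_smul, IsLinearMap.mk'_apply]
    _ = g w := congrArg g (b.sum_repr w)

theorem trace_sum_mul_mul (s : Finset κ) (P Q : κ → Module.End R M) (T : Module.End R M) :
    trace R M (∑ k ∈ s, P k * T * Q k) = trace R M (T * ∑ k ∈ s, Q k * P k) := by
  simp_rw [Finset.mul_sum, map_sum, mul_assoc, trace_mul_comm R (P _), mul_assoc]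

end Basis

section TwistedTrace

variable {K A : Type*} [Field K] [Ring A] [HopfAlgebra K A]

local notation "S" => antipode K (A := A)

variable (K A) in
/-- The functional `h ↦ Tr(x ↦ h * S²(x))`, the integral on `A` given by a trace formula. -/
def twistedTrace : A →ₗ[K] K :=
  trace K A ∘ₗ lcomp K A (S ∘ₗ S) ∘ₗ LinearMap.mul K A

theorem twistedTrace_apply (h : A) :
    twistedTrace K A h = trace K A (mulLeft K h * (S ∘ₗ S)) :=
  rfl

theorem twistedTrace_mul_comm (a b : A) :
    twistedTrace K A (a * b) = twistedTrace K A (b * S (S a)) := by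
  have h_left : mulLeft K (a * b) * (S ∘ₗ S) = mulLeft K a * (mulLeft K b * (S ∘ₗ S)) := by
    ext x; simp
  have h_right : mulLeft K (b * S (S a)) * (S ∘ₗ S) = mulLeft K b * (S ∘ₗ S) * mulLeft K a := by
    ext x; simp [mul_assoc, antipode_mul_antidistrib]
  rw [twistedTrace_apply, twistedTrace_apply, h_left, h_right, trace_mul_comm]

variable {ι : Type*} [Fintype ι]

theorem sum_contractFst_mul_antipode_contractFst (b : Module.Basis ι K A) (p : A →ₗ[K] K)
    (h x : A) :
    ∑ k, contractFst (p ∘ₗ mulRight K (b k)) (h * S (S (contractFst (b.coord k ∘ₗ S) x))) =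
      contractFst p h * S (S x) :=
  calc ∑ k, contractFst (p ∘ₗ mulRight K (b k)) (h * S (S (contractFst (b.coord k ∘ₗ S) x)))
      = sweedler K x fun x₁ x₂ => ∑ k, b.repr (S x₁) k •
          sweedler K (h * S (S x₂)) fun u v => p (u * b k) • v := by
        simp only [contractFst_apply _ x, map_sweedler, mul_sweedler, sum_sweedler]
        simp [contractFst_apply]
    _ = sweedler K x fun x₁ x₂ => sweedler K (h * S (S x₂)) fun u v => p (u * S x₁) • v :=
        congrArg (sweedler K x) <| funext₂ fun x₁ x₂ => sum_repr_smul_apply_basis b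
          (fun w => sweedler K (h * S (S x₂)) fun u v => p (u * w) • v) (S x₁)
    _ = sweedler K x fun x₁ x₂ => sweedler K h fun u v => sweedler K x₂ fun y z =>
          p (u * S (S y) * S x₁) • (v * S (S z)) :=
        congrArg (sweedler K x) <| funext₂ fun x₁ x₂ => (sweedler_mul h _ _).trans <|
          congrArg (sweedler K h) <| funext₂ fun u v => sweedler_antipode_antipode x₂ _
    _ = sweedler K h fun u v => sweedler K x fun x₁ x₂ => sweedler K x₂ fun y z =>
          p (u * S (x₁ * S y)) • (v * S (S z)) := by
        simp only [antipode_mul_antidistrib, mul_assoc]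
        exact sweedler_comm x h _
    _ = sweedler K h fun u v => p (u * S 1) • (v * S (S x)) :=
        congrArg (sweedler K h) <| funext₂ fun u v =>
          sweedler_mul_antipode_cancel_left (fun y z => p (u * S y) • (v * S (S z))) x
    _ = contractFst p h * S (S x) := by
        simp only [contractFst_apply, sweedler_mul_right, antipode_one, mul_one, smul_mul_assoc]

theorem sum_contractFst_contractFst_mulRight (b : Module.Basis ι K A) (p : A →ₗ[K] K) (x : A) :
    ∑ k, contractFst (b.coord k ∘ₗ S) (contractFst (p ∘ₗ mulRight K (b k)) x) = p 1 • x :=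
  calc ∑ k, contractFst (b.coord k ∘ₗ S) (contractFst (p ∘ₗ mulRight K (b k)) x)
      = sweedler K x fun y z => sweedler K z fun z₁ z₂ =>
          (∑ k, b.repr (S z₁) k • p (y * b k)) • z₂ := by
        simp only [contractFst_apply _ x, map_sweedler, sum_sweedler, map_smul]
        simp only [contractFst_apply, smul_sweedler, sum_sweedler, Finset.sum_smul, comp_apply,
          mulRight_apply, Module.Basis.coord_apply, smul_smul, smul_eq_mul, mul_comm]
    _ = sweedler K x fun y z => sweedler K z fun z₁ z₂ => p (y * S z₁) • z₂ :=
        congrArg (sweedler K x) <| funext₂ fun y z => congrArg (sweedler K z) <|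
          funext₂ fun z₁ z₂ => congrArg (· • z₂) <|
            sum_repr_smul_apply_basis b (fun w => p (y * w)) (S z₁)
    _ = p 1 • x := sweedler_mul_antipode_cancel_left (fun y z => p y • z) x

variable [FiniteDimensional K A]

theorem twistedTrace_contractFst (p : A →ₗ[K] K) (h : A) :
    twistedTrace K A (contractFst p h) = p 1 * twistedTrace K A h := by
  let b := Module.finBasis K A
  let P k := contractFst (p ∘ₗ mulRight K (b k))
  let Q k := contractFst (b.coord k ∘ₗ S)
  have h_PTQ : mulLeft K (contractFst p h) * (S ∘ₗ S) =
      ∑ k, P k * (mulLeft K h * (S ∘ₗ S)) * Q k := by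
    ext x
    simpa using (sum_contractFst_mul_antipode_contractFst b p h x).symm
  have h_QP : ∑ k, Q k * P k = p 1 • 1 := by
    ext x
    simpa using sum_contractFst_contractFst_mulRight b p x
  rw [twistedTrace_apply, h_PTQ, trace_sum_mul_mul, h_QP, mul_smul_one, map_smul, smul_eq_mul,
    twistedTrace_apply]

theorem contractSnd_twistedTrace (h : A) :
    contractSnd (twistedTrace K A) h = twistedTrace K A h • 1 := by
  rw [← sub_eq_zero, ← Module.forall_dual_apply_eq_zero_iff K]
  intro p
  rw [map_sub, apply_contractSnd, twistedTrace_contractFst, map_smul, smul_eq_mul, mul_comm,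
    sub_self]

end TwistedTrace

/-- A two-sided integral `l` of the Hopf algebra `A`, normalised by `ε(l) = 1`. -/
structure IsHaarIntegral (R : Type*) {A : Type*} [CommSemiring R] [Semiring A] [HopfAlgebra R A]
    (l : A) : Prop where
  mul_left (h : A) : h * l = counit (R := R) h • l
  mul_right (h : A) : l * h = counit (R := R) h • l
  counit_eq_one : counit (R := R) l = 1

namespace IsHaarIntegral

section CommSemiring

variable {R A M : Type*} [CommSemiring R] [Semiring A] [HopfAlgebra R A] [AddCommMonoid M]
  [Module R M] {l : A}

local notation "S" => antipode R (A := A)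
local notation "ε" => counit (R := R) (A := A)

theorem sweedler_mul_right_eq_smul (hl : IsHaarIntegral R l) (h : A) (B : A → A → M)
    (hB₁ : ∀ y, IsLinearMap R fun x => B x y := by fun_prop)
    (hB₂ : ∀ x, IsLinearMap R fun y => B x y := by fun_prop) :
    sweedler R (l * h) B = ε h • sweedler R l B := by
  rw [hl.mul_right]
  exact (isLinearMap_sweedler_left isLinearMap_id hB₁ hB₂).map_smul _ l

theorem sweedler_mul_left_eq_smul (hl : IsHaarIntegral R l) (h : A) (B : A → A → M)
    (hB₁ : ∀ y, IsLinearMap R fun x => B x y := by fun_prop)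
    (hB₂ : ∀ x, IsLinearMap R fun y => B x y := by fun_prop) :
    sweedler R (h * l) B = ε h • sweedler R l B := by
  rw [hl.mul_left]
  exact (isLinearMap_sweedler_left isLinearMap_id hB₁ hB₂).map_smul _ l

theorem sweedler_mul_antipode_right (hl : IsHaarIntegral R l) (h : A) (B : A → A → M)
    (hB₁ : ∀ y, IsLinearMap R fun x => B x y := by fun_prop)
    (hB₂ : ∀ x, IsLinearMap R fun y => B x y := by fun_prop) :
    sweedler R l (fun x y => B x (y * S h)) = sweedler R l fun x y => B (x * h) y :=
  calc sweedler R l (fun x y => B x (y * S h))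
      = sweedler R h fun u v => ε u • sweedler R l fun x y => B x (y * S v) :=
        (sweedler_counit_left (fun v => sweedler R l fun x y => B x (y * S v)) h).symm
    _ = sweedler R h fun u v => sweedler R u fun u₁ u₂ =>
          sweedler R l fun x y => B (x * u₁) (y * (u₂ * S v)) :=
        congrArg (sweedler R h) <| funext₂ fun u v => by
          rw [← hl.sweedler_mul_right_eq_smul u fun x y => B x (y * S v),
            sweedler_mul l u fun x y => B x (y * S v), sweedler_comm]
          simp only [mul_assoc]
    _ = sweedler R l fun x y => B (x * h) y := by
        rw [sweedler_mul_antipode_cancel_right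
          (fun u v => sweedler R l fun x y => B (x * u) (y * v)) h]
        simp only [mul_one]

theorem sweedler_antipode_mul_left (hl : IsHaarIntegral R l) (h : A) (B : A → A → M)
    (hB₁ : ∀ y, IsLinearMap R fun x => B x y := by fun_prop)
    (hB₂ : ∀ x, IsLinearMap R fun y => B x y := by fun_prop) :
    sweedler R l (fun x y => B (S h * x) y) = sweedler R l fun x y => B x (h * y) :=
  calc sweedler R l (fun x y => B (S h * x) y)
      = sweedler R h fun u v => ε v • sweedler R l fun x y => B (S u * x) y :=
        (sweedler_counit_right (fun u => sweedler R l fun x y => B (S u * x) y) h).symm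
    _ = sweedler R h fun u v => sweedler R v fun v₁ v₂ =>
          sweedler R l fun x y => B (S u * v₁ * x) (v₂ * y) :=
        congrArg (sweedler R h) <| funext₂ fun u v => by
          rw [← hl.sweedler_mul_left_eq_smul v fun x y => B (S u * x) y,
            sweedler_mul v l fun x y => B (S u * x) y]
          simp only [mul_assoc]
    _ = sweedler R l fun x y => B x (h * y) := by
        rw [sweedler_antipode_mul_cancel_left
          (fun u v => sweedler R l fun x y => B (u * x) (v * y)) h]
        simp only [one_mul]

end CommSemiring

section Field

variable {K A : Type*} [Field K] [Ring A] [HopfAlgebra K A] {l : A}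

local notation "S" => antipode K (A := A)
local notation "ε" => counit (R := K) (A := A)
local notation "ψ" => twistedTrace K A

variable [FiniteDimensional K A]

theorem twistedTrace_eq_one (hl : IsHaarIntegral K l) : ψ l = 1 := by
  have h_rank_one : mulLeft K l * (S ∘ₗ S) = smulRight ε l := by
    ext x; simp [hl.mul_right]
  rw [twistedTrace_apply, h_rank_one, trace_smulRight, hl.counit_eq_one]

theorem contractSnd_twistedTrace_eq_one (hl : IsHaarIntegral K l) :
    sweedler K l (fun x y => ψ y • x) = 1 := by
  rw [← contractSnd_apply, contractSnd_twistedTrace, hl.twistedTrace_eq_one, one_smul]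

theorem sweedler_twistedTrace_mul_antipode (hl : IsHaarIntegral K l) (h : A) :
    sweedler K l (fun x y => ψ (y * S h) • x) = h :=
  calc sweedler K l (fun x y => ψ (y * S h) • x)
      = sweedler K l fun x y => ψ y • (x * h) :=
        hl.sweedler_mul_antipode_right h fun x y => ψ y • x
    _ = h := by
        simp only [← smul_mul_assoc]
        rw [← sweedler_mul_right, hl.contractSnd_twistedTrace_eq_one, one_mul]

theorem sweedler_twistedTrace_mul (hl : IsHaarIntegral K l) (h : A) :
    sweedler K l (fun x y => ψ (h * y) • x) = S h :=
  calc sweedler K l (fun x y => ψ (h * y) • x)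
      = sweedler K l fun x y => ψ y • (S h * x) :=
        (hl.sweedler_antipode_mul_left h fun x y => ψ y • x).symm
    _ = S h := by
        simp only [← mul_smul_comm]
        rw [← mul_sweedler, hl.contractSnd_twistedTrace_eq_one, mul_one]

theorem antipode_injective (hl : IsHaarIntegral K l) : Function.Injective S := by
  intro x y h_eq
  rw [← hl.sweedler_twistedTrace_mul_antipode x, h_eq, hl.sweedler_twistedTrace_mul_antipode y]

theorem antipode_surjective (hl : IsHaarIntegral K l) : Function.Surjective S :=
  LinearMap.surjective_of_injective hl.antipode_injective

theorem eq_of_forall_twistedTrace_mul_eq (hl : IsHaarIntegral K l) {h k : A}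
    (h_eq : ∀ x, ψ (h * x) = ψ (k * x)) : h = k := by
  apply hl.antipode_injective
  simp only [← hl.sweedler_twistedTrace_mul, h_eq]

theorem exists_twistedTrace_mul_eq (hl : IsHaarIntegral K l) (f : Module.Dual K A) :
    ∃ u, ∀ x, ψ (u * x) = f x := by
  let Φ : A →ₗ[K] Module.Dual K A := (LinearMap.mul K A).compr₂ ψ
  have h_inj : Function.Injective Φ := fun h k h_eq =>
    hl.eq_of_forall_twistedTrace_mul_eq fun x => LinearMap.congr_fun h_eq x
  have h_surj : Function.Surjective Φ :=
    (injective_iff_surjective_of_finrank_eq_finrank Subspace.dual_finrank_eq.symm).1 h_inj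
  exact (h_surj f).imp fun u hu x => LinearMap.congr_fun hu x

theorem antipode_eq_self (hl : IsHaarIntegral K l) : S l = l := by
  obtain ⟨k, hk⟩ := hl.antipode_surjective l
  have h_counit : ε k = 1 := by rw [← counit_antipode, hk, hl.counit_eq_one]
  calc S l = S (l * k) := by rw [hl.mul_right, h_counit, one_smul]
    _ = l * S l := by rw [antipode_mul_antidistrib, hk]
    _ = l := by rw [hl.mul_right, counit_antipode, hl.counit_eq_one, one_smul]

end Field

end IsHaarIntegral

section Contraction

variable {R C : Type*} [CommSemiring R] [AddCommMonoid C] [Module R C] [Coalgebra R C]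

theorem counit_contractFst (f : C →ₗ[R] R) (h : C) : counit (R := R) (contractFst f h) = f h := by
  simp only [contractFst_apply, map_sweedler, map_smul, smul_eq_mul, mul_comm (f _)]
  exact sweedler_counit_right f h

theorem comul_contractFst (f : C →ₗ[R] R) (h : C) :
    comul (R := R) (contractFst f h) = sweedler R h fun x y => contractFst f x ⊗ₜ[R] y :=
  calc comul (R := R) (contractFst f h)
      = sweedler R h fun x y => sweedler R y fun y₁ y₂ => (f x • y₁) ⊗ₜ[R] y₂ := by
        simp only [contractFst_apply, map_sweedler, map_smul, ← sweedler_tmul, smul_sweedler,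
          smul_tmul']
    _ = sweedler R h fun x y => sweedler R x fun x₁ x₂ => (f x₁ • x₂) ⊗ₜ[R] y :=
        (sweedler_coassoc _ h).symm
    _ = sweedler R h fun x y => contractFst f x ⊗ₜ[R] y :=
        congrArg (sweedler R h) <| funext₂ fun x y =>
          (map_sweedler ((mk R C C).flip y) x fun x₁ x₂ => f x₁ • x₂).symm

end Contraction

theorem mul_pow_eq_pow_mul_iterate {M : Type*} [Monoid M] {σ : M → M} {u : M}
    (hu : ∀ c, c * u = u * σ c) (n : ℕ) (c : M) : c * u ^ n = u ^ n * σ^[n] c := by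
  induction n with
  | zero => simp
  | succ n ih => rw [pow_succ, ← mul_assoc, ih, mul_assoc, hu, ← mul_assoc,
      Function.iterate_succ_apply']

section DistinguishedGroupLike

variable {K A : Type*} [Field K] [Ring A] [HopfAlgebra K A] {l : A}

local notation "S" => antipode K (A := A)
local notation "ψ" => twistedTrace K A

variable (K) in
/-- The element `ψ(l₍₁₎) l₍₂₎`, where `ψ` is the twisted trace. For a Haar integral `l` this is the
distinguished group-like element of `A`, which measures how far `ψ` is from being two-sided. -/
def distinguishedGroupLike (l : A) : A :=
  contractFst ψ l

variable [FiniteDimensional K A]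

theorem contractSnd_comp_contractFst_twistedTrace (p : A →ₗ[K] K) (h : A) :
    contractSnd (p ∘ₗ contractFst ψ) h = p (contractFst ψ h) • 1 :=
  calc contractSnd (p ∘ₗ contractFst ψ) h
      = sweedler K h fun x y => sweedler K y fun y₁ y₂ => p y₂ • ψ y₁ • x := by
        simp only [contractSnd_apply, contractFst_apply, comp_apply, map_sweedler, map_smul,
          sweedler_smul, smul_smul, smul_eq_mul, mul_comm]
    _ = sweedler K h fun x y => sweedler K x fun x₁ x₂ => p y • ψ x₂ • x₁ :=
        (sweedler_coassoc _ h).symm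
    _ = sweedler K h fun x y => p y • ψ x • 1 := by
        simp only [← smul_sweedler, ← contractSnd_apply, contractSnd_twistedTrace]
    _ = p (contractFst ψ h) • 1 := by
        simp only [contractFst_apply, map_sweedler, map_smul, sweedler_smul, smul_smul,
          smul_eq_mul, mul_comm]

namespace IsHaarIntegral

theorem eq_smul_twistedTrace (hl : IsHaarIntegral K l) {f : Module.Dual K A} {c : K}
    (hf : contractSnd f l = c • 1) : f = c • ψ := by
  obtain ⟨u, hu⟩ := hl.exists_twistedTrace_mul_eq f
  have h_antipode : S u = S (c • 1) :=
    calc S u = contractSnd f l := by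
          simp only [← hl.sweedler_twistedTrace_mul, hu, contractSnd_apply]
      _ = S (c • 1) := by rw [hf, map_smul, antipode_one]
  ext x
  rw [← hu, hl.antipode_injective h_antipode, smul_one_mul, map_smul, LinearMap.smul_apply]

theorem contractFst_twistedTrace (hl : IsHaarIntegral K l) (h : A) :
    contractFst ψ h = ψ h • distinguishedGroupLike K l := by
  rw [← sub_eq_zero, ← Module.forall_dual_apply_eq_zero_iff K]
  intro p
  have h_int : p ∘ₗ contractFst ψ = p (distinguishedGroupLike K l) • ψ :=
    hl.eq_smul_twistedTrace (contractSnd_comp_contractFst_twistedTrace p l)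
  rw [map_sub, map_smul, sub_eq_zero, smul_eq_mul, mul_comm]
  exact LinearMap.congr_fun h_int h

theorem isGroupLikeElem (hl : IsHaarIntegral K l) :
    IsGroupLikeElem K (distinguishedGroupLike K l) where
  counit_eq_one := (counit_contractFst ψ l).trans hl.twistedTrace_eq_one
  comul_eq_tmul_self :=
    calc comul (distinguishedGroupLike K l)
        = sweedler K l fun x y => contractFst ψ x ⊗ₜ[K] y := comul_contractFst ψ l
      _ = sweedler K l fun x y => distinguishedGroupLike K l ⊗ₜ[K] (ψ x • y) := by
          simp only [hl.contractFst_twistedTrace, smul_tmul]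
      _ = distinguishedGroupLike K l ⊗ₜ[K] distinguishedGroupLike K l :=
          (map_sweedler (TensorProduct.mk K A A (distinguishedGroupLike K l)) l
            fun x y => ψ x • y).symm

theorem mul_distinguishedGroupLike (hl : IsHaarIntegral K l) (c : A) :
    c * distinguishedGroupLike K l = distinguishedGroupLike K l * S (S (S (S c))) := by
  obtain ⟨g, hg⟩ := hl.exists_twistedTrace_mul_eq (ψ ∘ₗ S)
  have h_conj (c : A) : c * g = g * S (S (S (S c))) := by
    refine hl.eq_of_forall_twistedTrace_mul_eq fun x => ?_
    calc ψ (c * g * x) = ψ (S (x * S (S c))) := by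
          rw [mul_assoc, twistedTrace_mul_comm, mul_assoc, hg, comp_apply]
      _ = ψ (S (S (S (S (S c))) * x)) := by
          rw [antipode_mul_antidistrib, antipode_mul_antidistrib, twistedTrace_mul_comm]
      _ = ψ (g * S (S (S (S c))) * x) := by rw [mul_assoc, hg, comp_apply]
  have h_antipode : S (S g) = distinguishedGroupLike K l :=
    calc S (S g) = sweedler K l fun x y => ψ (S y) • S x := by
          simp only [← hl.sweedler_twistedTrace_mul g, hg, map_sweedler, map_smul, comp_apply]
      _ = sweedler K (S l) fun x y => ψ x • y := (sweedler_antipode l fun x y => ψ x • y).symm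
      _ = distinguishedGroupLike K l := by rw [hl.antipode_eq_self]; rfl
  obtain ⟨c, rfl⟩ := (hl.antipode_surjective.comp hl.antipode_surjective) c
  simp only [Function.comp_apply, ← h_antipode, ← antipode_mul_antidistrib, h_conj]

theorem exists_distinguishedGroupLike_pow_eq_one (hl : IsHaarIntegral K l) :
    ∃ N : ℕ, 0 < N ∧ distinguishedGroupLike K l ^ N = 1 := by
  have : Finite (GroupLike K A) := linearIndep_groupLikeVal.finite
  obtain ⟨N, hN, h_pow⟩ := (isOfFinOrder_of_finite
    (⟨_, hl.isGroupLikeElem⟩ : GroupLike K A)).exists_pow_eq_one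
  exact ⟨N, hN, congrArg GroupLike.val h_pow⟩

theorem exists_iterate_antipode_eq_id (hl : IsHaarIntegral K l) :
    ∃ N : ℕ, 0 < N ∧ S^[N] = id := by
  obtain ⟨N, hN, h_pow⟩ := hl.exists_distinguishedGroupLike_pow_eq_one
  refine ⟨4 * N, by omega, funext fun c => ?_⟩
  have h_conj := mul_pow_eq_pow_mul_iterate (σ := S^[4]) hl.mul_distinguishedGroupLike N c
  rw [h_pow, mul_one, one_mul, ← Function.iterate_mul] at h_conj
  exact h_conj.symm

theorem antipode_antipode_antipode_antipode (hl : IsHaarIntegral K l) (h_one : ψ 1 ≠ 0) (x : A) :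
    S (S (S (S x))) = x := by
  have h_eq_one : distinguishedGroupLike K l = 1 := by
    refine smul_right_injective A h_one ?_
    exact (hl.contractFst_twistedTrace 1).symm.trans (sweedler_one fun x y => ψ x • y)
  simpa [h_eq_one] using (hl.mul_distinguishedGroupLike x).symm

end IsHaarIntegral

end DistinguishedGroupLike

section Maschke

variable {K A M : Type*} [Field K] [Ring A] [HopfAlgebra K A] [AddCommMonoid M] [Module K M]
  {l : A}

local notation "S" => antipode K (A := A)

/-- The average `a ↦ l₍₁₎ p(S(l₍₂₎) a)` of a linear map `p` along `l`, as in the proof of Maschke's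
theorem. -/
def haarAverage (l : A) (p : A →ₗ[K] A) (a : A) : A :=
  sweedler K l fun x y => x * p (S y * a)

namespace IsHaarIntegral

theorem haarAverage_eq_self (hl : IsHaarIntegral K l) {p : A →ₗ[K] A} {a : A}
    (hp : ∀ h : A, p (h * a) = h * a) : haarAverage l p a = a := by
  simp only [haarAverage, hp, ← mul_assoc]
  rw [← sweedler_mul_right, sweedler_mul_antipode, hl.counit_eq_one, one_smul, one_mul]

variable [FiniteDimensional K A]

theorem sweedler_mul_left_antipode (hl : IsHaarIntegral K l) (h : A) (B : A → A → M)
    (hB₁ : ∀ y, IsLinearMap K fun x => B x y := by fun_prop)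
    (hB₂ : ∀ x, IsLinearMap K fun y => B x y := by fun_prop) :
    sweedler K l (fun x y => B (h * x) (S y)) = sweedler K l fun x y => B x (S y * h) := by
  obtain ⟨k, rfl⟩ := hl.antipode_surjective h
  simpa only [antipode_mul_antidistrib] using hl.sweedler_antipode_mul_left k fun x y => B x (S y)

theorem haarAverage_mul (hl : IsHaarIntegral K l) (p : A →ₗ[K] A) (h a : A) :
    haarAverage l p (h * a) = h * haarAverage l p a := by
  simp only [haarAverage, mul_sweedler, ← mul_assoc]
  exact (hl.sweedler_mul_left_antipode h fun x y => x * p (y * a)).symm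

theorem isSemisimpleRing (hl : IsHaarIntegral K l) : IsSemisimpleRing A := by
  refine { exists_isCompl := fun N => ?_ }
  obtain ⟨r, hr⟩ := exists_leftInverse_of_injective (N.restrictScalars K).subtype
    (Submodule.ker_subtype _)
  let p : A →ₗ[K] A := (N.restrictScalars K).subtype ∘ₗ r
  have hp (a : A) (ha : a ∈ N) : p a = a := congrArg Subtype.val (LinearMap.congr_fun hr ⟨a, ha⟩)
  have h_linear : IsLinearMap K fun a => haarAverage l p a := by
    simp only [haarAverage]
    fun_prop
  let q : A →ₗ[A] A :=
    { toFun := haarAverage l p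
      map_add' := h_linear.map_add
      map_smul' h a := hl.haarAverage_mul p h a }
  have hq : IsProj N q :=
    { map_mem a := sum_mem fun _ _ => N.smul_mem _ (r _).2
      map_id a ha := hl.haarAverage_eq_self fun h => hp _ (N.smul_mem h ha) }
  exact ⟨ker q, hq.isCompl⟩

end IsHaarIntegral

end Maschke

section RootsOfUnity

variable {K ι : Type*} [Field K] [Fintype ι] {κ : ι → Type*} [∀ i, Fintype (κ i)]
  {μ : ∀ i, κ i → K} {N : ℕ}

theorem sum_eq_zero_of_sum_mul_sum_inv_eq_zero_of_ringHom (θ : K →+* ℂ) (hN : N ≠ 0)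
    (hμ : ∀ i j, μ i j ^ N = 1) (h_sum : ∑ i, (∑ j, μ i j) * ∑ j, (μ i j)⁻¹ = 0) (i : ι) :
    ∑ j, μ i j = 0 := by
  have h_inv (i : ι) (j : κ i) : θ (μ i j)⁻¹ = starRingEnd ℂ (θ (μ i j)) := by
    rw [map_inv₀, Complex.inv_eq_conj
      (Complex.norm_eq_one_of_pow_eq_one (by rw [← map_pow, hμ, map_one]) hN)]
  have h_normSq : ∑ i, Complex.normSq (θ (∑ j, μ i j)) = 0 := by
    rw [← Complex.ofReal_eq_zero, ← map_zero θ, ← h_sum]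
    simp [Complex.normSq_eq_conj_mul_self, h_inv, mul_comm]
  rw [Finset.sum_eq_zero_iff_of_nonneg fun _ _ => Complex.normSq_nonneg _] at h_normSq
  simpa only [Complex.normSq_eq_zero, map_eq_zero] using h_normSq i (Finset.mem_univ i)

/- The roots of unity are algebraic over `ℚ`, hence lie in a subfield that embeds into `ℂ`; there
`z⁻¹` is the complex conjugate of `z`, so that the sum is one of squared absolute values. -/
theorem sum_eq_zero_of_sum_mul_sum_inv_eq_zero [CharZero K] (hN : N ≠ 0)
    (hμ : ∀ i j, μ i j ^ N = 1) (h_sum : ∑ i, (∑ j, μ i j) * ∑ j, (μ i j)⁻¹ = 0) (i : ι) :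
    ∑ j, μ i j = 0 := by
  have h_mem (i : ι) (j : κ i) : μ i j ∈ algebraicClosure ℚ K :=
    mem_algebraicClosure_iff.2 (.of_pow (Nat.pos_of_ne_zero hN) (hμ i j ▸ isAlgebraic_one))
  let ν (i : ι) (j : κ i) : algebraicClosure ℚ K := ⟨μ i j, h_mem i j⟩
  let θ : algebraicClosure ℚ K →+* ℂ :=
    letI : Algebra ℚ (algebraicClosure ℚ K) := (algebraicClosure ℚ K).algebra'
    haveI := algebraicClosure.isAlgebraic ℚ K
    (IsAlgClosed.lift : algebraicClosure ℚ K →ₐ[ℚ] ℂ).toRingHom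
  have hν_sum := sum_eq_zero_of_sum_mul_sum_inv_eq_zero_of_ringHom (μ := ν) θ hN
    (fun i j => Subtype.ext (hμ i j)) (Subtype.ext (by push_cast; exact h_sum)) i
  simpa [ν] using congrArg Subtype.val hν_sum

end RootsOfUnity

section FiniteOrder

variable {K V : Type*} [Field K] [AddCommGroup V] [Module K V]

theorem trace_eq_sum_of_apply_basis_eq_smul {ι : Type*} [Fintype ι] {f : Module.End K V}
    (b : Module.Basis ι K V) {μ : ι → K} (hf : ∀ i, f (b i) = μ i • b i) :
    trace K V f = ∑ i, μ i := by
  classical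
  simp [trace_eq_matrix_trace K b, Matrix.trace, toMatrix_apply, hf]

variable [FiniteDimensional K V]

theorem exists_basis_apply_eq_smul {f : Module.End K V} (hf : ⨆ μ, f.eigenspace μ = ⊤) :
    ∃ (b : Module.Basis (Fin (Module.finrank K V)) K V) (μ : Fin (Module.finrank K V) → K),
      ∀ i, f (b i) = μ i • b i := by
  classical
  have h_internal := DirectSum.isInternal_submodule_of_iSupIndep_of_iSup_eq_top
    f.eigenspaces_iSupIndep hf
  let b := h_internal.collectedBasis fun μ => Module.finBasis K (f.eigenspace μ)
  have := FiniteDimensional.fintypeBasisIndex b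
  let e := Fintype.equivFinOfCardEq (Module.finrank_eq_card_basis b).symm
  refine ⟨b.reindex e, fun i => (e.symm i).1, fun i => ?_⟩
  rw [b.reindex_apply]
  exact Module.End.mem_eigenspace_iff.1 (h_internal.collectedBasis_mem _ (e.symm i))

variable [IsAlgClosed K] [CharZero K]

theorem exists_trace_eq_sum_and_trace_eq_sum_inv {f g : Module.End K V} {N : ℕ} (hN : N ≠ 0)
    (hf : f ^ N = 1) (hgf : g * f = 1) :
    ∃ μ : Fin (Module.finrank K V) → K, (∀ i, μ i ^ N = 1) ∧
      trace K V f = ∑ i, μ i ∧ trace K V g = ∑ i, (μ i)⁻¹ := by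
  have h_semisimple : f.IsSemisimple :=
    Module.End.isSemisimple_of_squarefree_aeval_eq_zero (p := Polynomial.X ^ N - Polynomial.C 1)
      (Polynomial.separable_X_pow_sub_C 1 (Nat.cast_ne_zero.2 hN) one_ne_zero).squarefree
      (by simp [hf])
  obtain ⟨b, μ, hμ⟩ := exists_basis_apply_eq_smul h_semisimple.iSup_eigenspace_eq_top
  have hμ_pow (i) : μ i ^ N = 1 := by
    have h_eigen : (f ^ N) (b i) = μ i ^ N • b i :=
      Module.End.HasEigenvector.pow_apply ⟨Module.End.mem_eigenspace_iff.2 (hμ i), b.ne_zero i⟩ N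
    rw [hf, Module.End.one_apply] at h_eigen
    exact smul_left_injective K (b.ne_zero i) (by simpa using h_eigen.symm)
  have hg (i) : g (b i) = (μ i)⁻¹ • b i := by
    rw [eq_inv_smul_iff₀ (fun h => by simpa [h, hN] using hμ_pow i), ← map_smul, ← hμ]
    exact LinearMap.congr_fun hgf (b i)
  exact ⟨μ, hμ_pow, trace_eq_sum_of_apply_basis_eq_smul b hμ,
    trace_eq_sum_of_apply_basis_eq_smul b hg⟩

end FiniteOrder

section PiMatrix

variable {K ι : Type*} [Field K] {n : ι → Type*} [∀ i, Fintype (n i)]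

theorem exists_ne_zero_smul_pow_eq_one {m : Type*} [Fintype m] [DecidableEq m] [Nonempty m]
    [IsAlgClosed K] {N : ℕ} (hN : N ≠ 0) {u : Matrix m m K} (hu : IsUnit u)
    (h_central : ∀ M, Commute M (u ^ N)) : ∃ c : K, c ≠ 0 ∧ (c • u) ^ N = 1 := by
  obtain ⟨d, hd⟩ := Matrix.mem_range_scalar_of_commute_single fun i j _ => h_central (.single i j 1)
  have hd_ne : d ≠ 0 := by
    rintro rfl
    rw [map_zero] at hd
    exact (hu.pow N).ne_zero hd.symm
  obtain ⟨c, hc⟩ := IsAlgClosed.exists_pow_nat_eq d⁻¹ (Nat.pos_of_ne_zero hN)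
  refine ⟨c, fun h => by simp [h, hN, hd_ne, eq_comm] at hc, ?_⟩
  rw [smul_pow, hc, ← hd, Matrix.scalar_apply, ← Matrix.smul_one_eq_diagonal, smul_smul,
    inv_mul_cancel₀ hd_ne, one_smul]

variable [Fintype ι]

variable (K n) in
/-- The sum of the traces of the blocks, a nondegenerate symmetric functional on a product of matrix
algebras. -/
def blockTrace : (∀ i, Matrix (n i) (n i) K) →ₗ[K] K :=
  ∑ i, Matrix.traceLinearMap (n i) K K ∘ₗ proj i

theorem blockTrace_apply (x : ∀ i, Matrix (n i) (n i) K) :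
    blockTrace K n x = ∑ i, (x i).trace := by
  simp [blockTrace]

theorem blockTrace_mul_comm (x y : ∀ i, Matrix (n i) (n i) K) :
    blockTrace K n (x * y) = blockTrace K n (y * x) := by
  simp only [blockTrace_apply, Pi.mul_apply, Matrix.trace_mul_comm (x _)]

theorem eq_of_forall_blockTrace_mul_eq {x y : ∀ i, Matrix (n i) (n i) K}
    (h : ∀ z, blockTrace K n (x * z) = blockTrace K n (y * z)) : x = y := by
  classical
  funext i
  refine Matrix.ext_iff_trace_mul_right.2 fun M => ?_
  have h_block (x : ∀ i, Matrix (n i) (n i) K) :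
      blockTrace K n (x * Pi.single i M) = (x i * M).trace := by
    rw [blockTrace_apply, Finset.sum_eq_single i (fun j _ hj => by simp [hj]) (by simp)]
    simp
  rw [← h_block, h, h_block]

theorem trace_mulLeft_mul_mulRight (a b : ∀ i, Matrix (n i) (n i) K) :
    trace K (∀ i, Matrix (n i) (n i) K) (mulLeft K a * mulRight K b) =
      ∑ i, (a i).trace * (b i).trace := by
  classical
  have h_repr (i : ι) (M : Matrix (n i) (n i) K) (p q : n i) :
      (Matrix.stdBasis K (n i) (n i)).repr M (p, q) = M p q := by
    simp [Matrix.stdBasis]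
  rw [trace_eq_matrix_trace K (Pi.basis fun i => Matrix.stdBasis K (n i) (n i))]
  simp [Matrix.trace, toMatrix_apply, Fintype.sum_sigma, Fintype.sum_prod_type,
    Finset.sum_mul_sum, Pi.basis_apply, Pi.basis_repr, Matrix.stdBasis_eq_single, h_repr,
    Matrix.mul_apply, Matrix.single_apply, ite_and]

variable [CharZero K] [IsAlgClosed K] [∀ i, DecidableEq (n i)] [∀ i, Nonempty (n i)]

theorem trace_eq_zero_of_sum_trace_mul_trace_inv_eq_zero {N : ℕ} (hN : N ≠ 0)
    (u : (∀ i, Matrix (n i) (n i) K)ˣ) (h_central : ∀ x, Commute x (u.1 ^ N))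
    (h_sum : ∑ i, (u⁻¹.1 i).trace * (u.1 i).trace = 0) (i : ι) : (u.1 i).trace = 0 := by
  classical
  have hu_mul (i : ι) : u.1 i * u⁻¹.1 i = 1 := congrFun u.mul_inv i
  have hu_inv_mul (i : ι) : u⁻¹.1 i * u.1 i = 1 := congrFun u.inv_mul i
  have h_block (i : ι) : ∃ c : K, c ≠ 0 ∧ (c • u.1 i) ^ N = 1 :=
    exists_ne_zero_smul_pow_eq_one hN (.of_mul_eq_one _ (hu_mul i)) fun M =>
      (by simpa using congrFun (h_central (Pi.single i M)).eq i : M * u.1 i ^ N = u.1 i ^ N * M)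
  choose c hc h_pow using h_block
  have h_roots (i : ι) := exists_trace_eq_sum_and_trace_eq_sum_inv (V := n i → K)
    (f := (c i • u.1 i).toLin') (g := ((c i)⁻¹ • u⁻¹.1 i).toLin') hN
    (by rw [← Matrix.toLin'_pow, h_pow, Matrix.toLin'_one, Module.End.one_eq_id])
    (by rw [Module.End.mul_eq_comp, ← Matrix.toLin'_mul, smul_mul_smul_comm,
      inv_mul_cancel₀ (hc i), hu_inv_mul, one_smul, Matrix.toLin'_one, Module.End.one_eq_id])
  choose μ hμ h_trace h_trace_inv using h_roots
  have h_zero := sum_eq_zero_of_sum_mul_sum_inv_eq_zero hN hμ (by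
    rw [← h_sum]
    refine Finset.sum_congr rfl fun i _ => ?_
    rw [← h_trace, ← h_trace_inv, Matrix.trace_toLin'_eq, Matrix.trace_toLin'_eq,
      Matrix.trace_smul, Matrix.trace_smul, smul_mul_smul_comm, mul_inv_cancel₀ (hc i), one_smul,
      mul_comm]) i
  simpa [← h_trace, hc] using h_zero

end PiMatrix

section TwistedTraceOne

variable {K A : Type*} [Field K] [Ring A] [HopfAlgebra K A] {l : A}

local notation "S" => antipode K (A := A)
local notation "ψ" => twistedTrace K A

theorem twistedTrace_eq_trace_mulLeft_mul_mulRight {u : Aˣ} (hu : ∀ c, c * u = u * S (S c))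
    (h : A) : ψ h = trace K A (mulLeft K (h * u⁻¹.1) * mulRight K u.1) := by
  rw [twistedTrace_apply]
  congr 1
  ext x
  simp [hu]

namespace IsHaarIntegral

variable [FiniteDimensional K A]

theorem exists_unit_mul_eq_mul_antipode_antipode (hl : IsHaarIntegral K l)
    {χ : Module.Dual K A} (hχ_comm : ∀ x y, χ (x * y) = χ (y * x))
    (hχ : ∀ x y, (∀ z, χ (x * z) = χ (y * z)) → x = y) :
    ∃ u : Aˣ, ∀ c, c * u = u * S (S c) := by
  obtain ⟨u, hu⟩ := hl.exists_twistedTrace_mul_eq χ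
  have h_conj (c : A) : c * u = u * S (S c) := hl.eq_of_forall_twistedTrace_mul_eq fun x => by
    rw [mul_assoc, twistedTrace_mul_comm, mul_assoc, hu, hχ_comm, ← hu, mul_assoc]
  have h_inj : Function.Injective (mulLeft K u) := fun x y h_eq => hχ x y fun z => by
    rw [← hu, ← hu, ← mul_assoc, ← mul_assoc]
    exact congrArg (fun w => ψ (w * z)) h_eq
  obtain ⟨v, hv⟩ := LinearMap.surjective_of_injective h_inj 1
  have hvu : v * u = 1 := h_inj (by
    rw [mulLeft_apply] at hv ⊢
    rw [mulLeft_apply, ← mul_assoc, hv, one_mul, mul_one])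
  exact ⟨⟨u, v, hv, hvu⟩, h_conj⟩

variable [CharZero K] [IsAlgClosed K]

theorem twistedTrace_one_ne_zero (hl : IsHaarIntegral K l) : ψ 1 ≠ 0 := by
  have := hl.isSemisimpleRing
  obtain ⟨n, d, hd, ⟨e⟩⟩ := IsSemisimpleRing.exists_algEquiv_pi_matrix_of_isAlgClosed K A
  obtain ⟨u, hu⟩ := hl.exists_unit_mul_eq_mul_antipode_antipode
    (χ := blockTrace K (fun i => Fin (d i)) ∘ₗ e.toLinearMap)
    (fun x y => by simp [blockTrace_mul_comm])
    (fun x y h_eq => e.injective (eq_of_forall_blockTrace_mul_eq fun z => by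
      simpa using h_eq (e.symm z)))
  have h_trace (h : A) : ψ h = ∑ i, (e (h * u⁻¹.1) i).trace * (e u.1 i).trace := by
    rw [twistedTrace_eq_trace_mulLeft_mul_mulRight hu, ← trace_mulLeft_mul_mulRight,
      ← trace_conj' _ e.toLinearEquiv]
    congr 1
    exact LinearMap.ext fun x => by simp [LinearEquiv.conj_apply]
  obtain ⟨N, hN, h_id⟩ := hl.exists_iterate_antipode_eq_id
  have h_central (c : A) : Commute c (u.1 ^ N) := by
    rw [Commute, SemiconjBy, mul_pow_eq_pow_mul_iterate (σ := S^[2]) hu, ← Function.iterate_mul,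
      mul_comm, Function.iterate_mul, h_id, Function.iterate_id, id_eq]
  intro h_zero
  have h_block (i : Fin n) : (e u.1 i).trace = 0 :=
    trace_eq_zero_of_sum_trace_mul_trace_inv_eq_zero hN.ne' (Units.mapEquiv e.toMulEquiv u)
      (fun x => by simpa using (h_central (e.symm x)).map e)
      (by simpa [h_zero, ← map_inv] using (h_trace 1).symm) i
  exact zero_ne_one <|
    calc (0 : K) = ψ l := by simp [h_trace, h_block]
      _ = 1 := hl.twistedTrace_eq_one

end IsHaarIntegral

end TwistedTraceOne

section Involution

variable {K V : Type*} [Field K] [AddCommGroup V] [Module K V]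

theorem isIdempotentElem_inv_two_smul_one_add [NeZero (2 : K)] {σ : Module.End K V}
    (hσ : σ * σ = 1) : IsIdempotentElem ((2 : K)⁻¹ • (1 + σ)) := by
  have h_sq : (1 + σ) * (1 + σ) = (2 : K) • (1 + σ) := by
    rw [mul_add, mul_one, add_mul, hσ, one_mul, two_smul, add_comm σ]
  rw [IsIdempotentElem, smul_mul_smul_comm, h_sq, smul_smul, mul_assoc,
    inv_mul_cancel₀ two_ne_zero, mul_one]

variable [FiniteDimensional K V]

theorem trace_eq_finrank_range {e : Module.End K V} (he : IsIdempotentElem e) :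
    trace K V e = Module.finrank K (range e) :=
  (IsIdempotentElem.isProj_range e he).trace

variable [CharZero K]

theorem exists_trace_mul_eq_intCast {σ e : Module.End K V} (hσ : σ * σ = 1)
    (he : IsIdempotentElem e) (h_comm : Commute σ e) : ∃ z : ℤ, trace K V (σ * e) = z := by
  have hp := isIdempotentElem_inv_two_smul_one_add hσ
  have hpe := hp.mul_of_commute (((Commute.one_left e).add_left h_comm).smul_left (2 : K)⁻¹) he
  have h_decomp : σ * e = (2 : K) • ((2 : K)⁻¹ • (1 + σ) * e) - e := by
    rw [← smul_mul_assoc, smul_smul, mul_inv_cancel₀ two_ne_zero, one_smul, add_mul, one_mul,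
      add_sub_cancel_left]
  refine ⟨2 * Module.finrank K (range ((2 : K)⁻¹ • (1 + σ) * e)) - Module.finrank K (range e), ?_⟩
  rw [h_decomp, map_sub, map_smul, trace_eq_finrank_range hpe, trace_eq_finrank_range he]
  simp

theorem eq_one_of_trace_eq_finrank_mul {σ : Module.End K V} (hσ : σ * σ = 1) {v : V} (hv : v ≠ 0)
    (hσv : σ v = v) {z : ℤ} (hz : z ≠ 0) (h_trace : trace K V σ = Module.finrank K V * z) :
    σ = 1 := by
  have hp := isIdempotentElem_inv_two_smul_one_add hσ
  set p := (2 : K)⁻¹ • (1 + σ) with hp_def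
  have h_decomp : σ = (2 : K) • p - 1 := by
    rw [hp_def, smul_smul, mul_inv_cancel₀ two_ne_zero, one_smul, add_sub_cancel_left]
  have h_int : (2 * Module.finrank K (range p) - Module.finrank K V : ℤ) =
      Module.finrank K V * z := by
    have h_rank : (2 * Module.finrank K (range p) - Module.finrank K V : K) =
        Module.finrank K V * z := by
      rw [← h_trace, h_decomp, map_sub, map_smul, trace_one, trace_eq_finrank_range hp,
        smul_eq_mul]
    exact_mod_cast h_rank
  have h_pos : 0 < Module.finrank K (range p) := by
    have hpv : p v = v := by
      rw [hp_def, LinearMap.smul_apply, LinearMap.add_apply, hσv, Module.End.one_apply,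
        ← two_smul K, smul_smul, inv_mul_cancel₀ two_ne_zero, one_smul]
    have : Nontrivial (range p) := ⟨⟨⟨v, v, hpv⟩, 0, fun h => hv (congrArg Subtype.val h)⟩⟩
    exact Module.finrank_pos
  have h_finrank : Module.finrank K (range p) = Module.finrank K V := by
    have h_le := Submodule.finrank_le (range p)
    rcases lt_or_gt_of_ne hz with hz | hz <;> nlinarith
  have h_surjective := range_eq_top.1 (Submodule.eq_top_of_finrank_eq h_finrank)
  have hp_one : p = 1 := by
    ext x
    obtain ⟨y, rfl⟩ := h_surjective x
    exact LinearMap.congr_fun hp y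
  rw [h_decomp, hp_one, two_smul, add_sub_cancel_right]

end Involution

section RegularCharacter

section Ring

variable (R A : Type*) [CommRing R] [Ring A] [HopfAlgebra R A]

local notation "S" => antipode R (A := A)

/-- The character of the left regular representation. -/
def regularCharacter : A →ₗ[R] R :=
  trace R A ∘ₗ LinearMap.mul R A

/-- The canonical map `x ⊗ y ↦ Δ(x) (1 ⊗ y)` of the Hopf–Galois theory. It conjugates the action of
`h ⊗ 1` into that of `Δ(h)`. -/
def galoisMap : A ⊗[R] A →ₗ[R] A ⊗[R] A :=
  lift ((LinearMap.mul R (A ⊗[R] A)).compl₁₂ comul (TensorProduct.mk R A A 1))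

variable {R A}

theorem regularCharacter_apply (h : A) : regularCharacter R A h = trace R A (mulLeft R h) :=
  rfl

@[simp]
theorem galoisMap_tmul (x y : A) : galoisMap R A (x ⊗ₜ y) = comul (R := R) x * 1 ⊗ₜ y :=
  rfl

theorem galoisMap_surjective : Function.Surjective (galoisMap R A) := by
  rw [← range_eq_top, eq_top_iff, ← span_tmul_eq_top, Submodule.span_le]
  rintro _ ⟨x, y, rfl⟩
  refine ⟨sweedler R x fun x₁ x₂ => x₁ ⊗ₜ (S x₂ * y), ?_⟩
  calc galoisMap R A (sweedler R x fun x₁ x₂ => x₁ ⊗ₜ (S x₂ * y))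
      = sweedler R x fun x₁ x₂ => sweedler R x₁ fun z w => z ⊗ₜ (w * S x₂ * y) := by
        simp only [map_sweedler, galoisMap_tmul]
        simp only [← sweedler_tmul, sweedler_mul_right, Algebra.TensorProduct.tmul_mul_tmul,
          mul_one, mul_assoc]
    _ = x ⊗ₜ y :=
        (sweedler_mul_antipode_cancel_right (fun z w => z ⊗ₜ[R] (w * y)) x).trans (by
          rw [one_mul])

theorem regularCharacter_antipode_antipode (hS : ∀ x : A, S (S (S (S x))) = x) (h : A) :
    regularCharacter R A (S (S h)) = regularCharacter R A h := by
  have h_sq : (S ∘ₗ S) * (S ∘ₗ S) = 1 := by ext x; simp [hS]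
  have h_conj : mulLeft R (S (S h)) = (S ∘ₗ S) * (mulLeft R h * (S ∘ₗ S)) := by
    ext x; simp [hS, antipode_mul_antidistrib]
  rw [regularCharacter_apply, h_conj, trace_mul_comm, mul_assoc, h_sq, mul_one,
    regularCharacter_apply]

theorem mulLeft_comul (h : A) : mulLeft R (comul (R := R) h) =
    sweedler R h fun x y => TensorProduct.map (mulLeft R x) (mulLeft R y) := by
  have h_tmul (x y : A) : LinearMap.mul R (A ⊗[R] A) (x ⊗ₜ y) =
      TensorProduct.map (mulLeft R x) (mulLeft R y) := by
    ext a b; simp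
  calc LinearMap.mul R (A ⊗[R] A) (comul h)
      = sweedler R h fun x y => LinearMap.mul R (A ⊗[R] A) (x ⊗ₜ y) := by
        rw [← sweedler_tmul, map_sweedler]
    _ = sweedler R h fun x y => TensorProduct.map (mulLeft R x) (mulLeft R y) := by
        simp only [h_tmul]

theorem commute_antipode_antipode_contractFst_regularCharacter
    (hS : ∀ x : A, S (S (S (S x))) = x) :
    Commute (S ∘ₗ S : Module.End R A) (contractFst (regularCharacter R A)) := by
  ext h
  simp only [Module.End.mul_apply, comp_apply, contractFst_apply, map_sweedler, map_smul]
  rw [sweedler_antipode_antipode h fun x y => regularCharacter R A x • y]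
  simp only [regularCharacter_antipode_antipode hS]

end Ring

variable {K A : Type*} [Field K] [Ring A] [HopfAlgebra K A] [FiniteDimensional K A]

local notation "S" => antipode K (A := A)
local notation "ε" => counit (R := K) (A := A)
local notation "ψ" => twistedTrace K A

theorem sweedler_regularCharacter_mul_regularCharacter (h : A) :
    sweedler K h (fun x y => regularCharacter K A x * regularCharacter K A y) =
      Module.finrank K A * regularCharacter K A h := by
  let e := LinearEquiv.ofBijective (galoisMap K A)
    ⟨injective_iff_surjective.2 galoisMap_surjective, galoisMap_surjective⟩
  have h_conj : mulLeft K (comul (R := K) h) =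
      e.conj (TensorProduct.map (mulLeft K h) LinearMap.id) := by
    rw [LinearEquiv.conj_apply, LinearEquiv.eq_comp_toLinearMap_symm]
    ext x y
    change comul h * galoisMap K A (x ⊗ₜ y) = galoisMap K A ((h * x) ⊗ₜ y)
    rw [galoisMap_tmul, galoisMap_tmul, Bialgebra.comul_mul, mul_assoc]
  calc sweedler K h (fun x y => regularCharacter K A x * regularCharacter K A y)
      = trace K (A ⊗[K] A) (mulLeft K (comul (R := K) h)) := by
        simp only [mulLeft_comul, map_sweedler, trace_tensorProduct', regularCharacter_apply]
    _ = Module.finrank K A * regularCharacter K A h := by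
        rw [h_conj, trace_conj', trace_tensorProduct', trace_id, mul_comm, regularCharacter_apply]

theorem contractFst_regularCharacter_mul_self :
    (contractFst (regularCharacter K A) * contractFst (regularCharacter K A) : Module.End K A) =
      (Module.finrank K A : K) • contractFst (regularCharacter K A) := by
  ext h
  calc contractFst (regularCharacter K A) (contractFst (regularCharacter K A) h)
      = sweedler K h fun x y => sweedler K y fun y₁ y₂ =>
          (regularCharacter K A x * regularCharacter K A y₁) • y₂ := by
        simp only [contractFst_apply, map_sweedler, map_smul, smul_sweedler, smul_smul]
    _ = sweedler K h fun x y => sweedler K x fun x₁ x₂ =>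
          (regularCharacter K A x₁ * regularCharacter K A x₂) • y :=
        (sweedler_coassoc (fun x₁ x₂ y =>
          (regularCharacter K A x₁ * regularCharacter K A x₂) • y) h).symm
    _ = (Module.finrank K A : K) • contractFst (regularCharacter K A) h := by
        simp only [← sweedler_smul, sweedler_regularCharacter_mul_regularCharacter]
        simp only [contractFst_apply, smul_sweedler, smul_smul]

namespace IsHaarIntegral

variable {l : A}

theorem regularCharacter_eq_one (hl : IsHaarIntegral K l) : regularCharacter K A l = 1 := by
  have h_rank_one : mulLeft K l = smulRight ε l := by ext x; simp [hl.mul_right]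
  rw [regularCharacter_apply, h_rank_one, trace_smulRight, hl.counit_eq_one]

theorem trace_eq_sweedler (hl : IsHaarIntegral K l) (T : Module.End K A) :
    trace K A T = sweedler K l fun x y => ψ (y * S (T x)) := by
  have h_sum : T = sweedler K l fun x y => smulRight (ψ ∘ₗ mulLeft K y ∘ₗ S) (T x) := by
    ext h
    conv_lhs => rw [← hl.sweedler_twistedTrace_mul_antipode h, map_sweedler]
    simp [sweedler]
  conv_lhs => rw [h_sum]
  simp only [map_sweedler, trace_smulRight, comp_apply, mulLeft_apply]

theorem sweedler_mul_antipode_antipode_antipode (hl : IsHaarIntegral K l)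
    (hS : ∀ x : A, S (S (S (S x))) = x) (h : A) :
    sweedler K h (fun x y => y * S (S (S x))) = ε h • 1 := by
  apply hl.antipode_injective
  simp only [map_sweedler, antipode_mul_antidistrib, hS, sweedler_mul_antipode, map_smul,
    antipode_one]

theorem trace_antipode_antipode_contractFst (hl : IsHaarIntegral K l)
    (hS : ∀ x : A, S (S (S (S x))) = x) (f : Module.Dual K A) :
    trace K A ((S ∘ₗ S : Module.End K A) * contractFst f) = f l * ψ 1 :=
  calc trace K A ((S ∘ₗ S : Module.End K A) * contractFst f)
      = sweedler K l fun x y => sweedler K x fun x₁ x₂ =>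
          f x₁ * ψ (y * S (S (S x₂))) := by
        rw [hl.trace_eq_sweedler]
        simp [contractFst_apply, map_sweedler, mul_sweedler]
    _ = sweedler K l fun x y => sweedler K y fun y₁ y₂ => f x * ψ (y₂ * S (S (S y₁))) :=
        sweedler_coassoc (fun x₁ x₂ y => f x₁ * ψ (y * S (S (S x₂)))) l
    _ = sweedler K l fun x y => ε y • (f x * ψ 1) := by
        simp only [← mul_sweedler, ← map_sweedler, hl.sweedler_mul_antipode_antipode_antipode hS,
          map_smul, mul_smul_comm]
    _ = f l * ψ 1 := sweedler_counit_right (fun x => f x * ψ 1) l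

variable [CharZero K]

theorem antipode_antipode_of_twistedTrace_one_ne_zero (hl : IsHaarIntegral K l) (h_one : ψ 1 ≠ 0)
    (h : A) : S (S h) = h := by
  have hS := hl.antipode_antipode_antipode_antipode h_one
  have : Nontrivial A := ⟨1, 0, fun h_eq => h_one (by rw [h_eq, map_zero])⟩
  let σ : Module.End K A := S ∘ₗ S
  have hσ : σ * σ = 1 := LinearMap.ext hS
  let χ := regularCharacter K A
  let e : Module.End K A := (Module.finrank K A : K)⁻¹ • contractFst χ
  have h_finrank : (Module.finrank K A : K) ≠ 0 := Nat.cast_ne_zero.2 Module.finrank_pos.ne'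
  have he : IsIdempotentElem e := by
    rw [IsIdempotentElem, smul_mul_smul_comm, contractFst_regularCharacter_mul_self, smul_smul,
      mul_assoc, inv_mul_cancel₀ h_finrank, mul_one]
  have h_comm : Commute σ e :=
    (commute_antipode_antipode_contractFst_regularCharacter hS).smul_right _
  obtain ⟨z, hz⟩ := exists_trace_mul_eq_intCast hσ he h_comm
  have h_trace : trace K A σ = ψ 1 := by
    rw [twistedTrace_apply, mulLeft_one, ← Module.End.one_eq_id, one_mul]
  have h_eq : ψ 1 = Module.finrank K A * z := by
    rw [← hz, mul_smul_comm, map_smul, hl.trace_antipode_antipode_contractFst hS,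
      hl.regularCharacter_eq_one, one_mul, smul_eq_mul, mul_inv_cancel_left₀ h_finrank]
  have hz_ne : z ≠ 0 := by
    rintro rfl
    exact h_one (by simpa using h_eq)
  exact LinearMap.congr_fun (eq_one_of_trace_eq_finrank_mul hσ one_ne_zero (by simp [σ]) hz_ne
    (h_trace.trans h_eq)) h

end IsHaarIntegral

end RegularCharacter

section AntipodeAntipode

namespace IsHaarIntegral

theorem baseChange {R A : Type*} [CommSemiring R] [Semiring A] [HopfAlgebra R A] {l : A}
    (hl : IsHaarIntegral R l) (R' : Type*) [CommSemiring R'] [Algebra R R'] :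
    IsHaarIntegral R' ((1 : R') ⊗ₜ[R] l) where
  mul_left h := by
    induction h with
    | zero => simp
    | tmul a b => simp [hl.mul_left, smul_tmul']
    | add a b ha hb => rw [add_mul, ha, hb, map_add, add_smul]
  mul_right h := by
    induction h with
    | zero => simp
    | tmul a b => simp [hl.mul_right, smul_tmul']
    | add a b ha hb => rw [mul_add, ha, hb, map_add, add_smul]
  counit_eq_one := by simp [hl.counit_eq_one]

theorem antipode_antipode {F H : Type*} [Field F] [CharZero F] [Ring H] [HopfAlgebra F H]
    [FiniteDimensional F H] {l : H} (hl : IsHaarIntegral F l) (h : H) :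
    antipode F (antipode F h) = h := by
  let K := AlgebraicClosure F
  have : CharZero K := charZero_of_injective_algebraMap (algebraMap F K).injective
  have hl_K := hl.baseChange K
  have h_antipode (k : H) : antipode K ((1 : K) ⊗ₜ[F] k) = 1 ⊗ₜ antipode F k := by
    simp [TensorProduct.antipode_def]
  have h_K := hl_K.antipode_antipode_of_twistedTrace_one_ne_zero hl_K.twistedTrace_one_ne_zero
    ((1 : K) ⊗ₜ[F] h)
  rw [h_antipode, h_antipode] at h_K
  exact Algebra.TensorProduct.includeRight_injective (algebraMap F K).injective h_K

end IsHaarIntegral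

end AntipodeAntipode

section CoadjointAction

variable {F H}

local notation "S" => antipode F (A := H)
local notation "ε" => counit (R := F) (A := H)

theorem adL_apply (h k : H) : adL F H h k = sweedler F h fun x y => x * k * S y := by
  rw [adL, comp_apply, ← sweedler_linearMap_tmul]
  simp [sweedler, mul_assoc]

theorem adL_mul (a b : H) : adL F H (a * b) = adL F H a * adL F H b := by
  ext k
  rw [Module.End.mul_apply, adL_apply, adL_apply, adL_apply,
    sweedler_mul a b fun x y => x * k * S y]
  simp only [mul_sweedler, sweedler_mul_right, antipode_mul_antidistrib, mul_assoc]

theorem rcoad_mul (α : Module.Dual F H) (a b : H) :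
    rcoad F H α (a * b) = rcoad F H (rcoad F H α a) b := by
  rw [rcoad, adL_mul]
  rfl

theorem rcoad_eq_counit_smul (hS : ∀ x : H, S (S x) = x) {α : Module.Dual F H}
    (hα : ∀ a b, α (a * b) = α (b * a)) (h : H) : rcoad F H α h = ε h • α := by
  have h_cancel : sweedler F h (fun x y => S y * x) = ε h • 1 := by
    simpa [map_sweedler, antipode_mul_antidistrib, hS] using
      congrArg S (sweedler_antipode_mul (R := F) h)
  ext k
  calc rcoad F H α h k
      = sweedler F h fun x y => α (S y * x * k) := by
        rw [rcoad, comp_apply, adL_apply, map_sweedler]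
        simp only [hα _ (S _), ← mul_assoc]
    _ = ε h • α k := by
        rw [← map_sweedler, ← sweedler_mul_right, h_cancel, smul_mul_assoc, one_mul, map_smul]

theorem sweedler_adL_mul (hS : ∀ x : H, S (S x) = x) (a b : H) :
    sweedler F a (fun x y => adL F H x (b * y)) = a * b := by
  have h_cancel (y : H) : sweedler F y (fun y₁ y₂ => y₂ * S y₁) = ε y • 1 := by
    simpa [map_sweedler, antipode_mul_antidistrib, hS] using
      congrArg S (sweedler_mul_antipode (R := F) y)
  calc sweedler F a (fun x y => adL F H x (b * y))
      = sweedler F a fun x y => sweedler F x fun x₁ x₂ => x₁ * (b * y) * S x₂ := by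
        simp only [adL_apply]
    _ = sweedler F a fun x y => sweedler F y fun y₁ y₂ => x * b * (y₂ * S y₁) := by
        simpa only [mul_assoc] using sweedler_coassoc (fun x₁ x₂ y => x₁ * (b * y) * S x₂) a
    _ = sweedler F a fun x y => ε y • (x * b) := by
        simp only [← mul_sweedler, h_cancel, mul_smul_one]
    _ = a * b := sweedler_counit_right (fun x => x * b) a

theorem apply_mul_comm_of_rcoad_eq_counit_smul (hS : ∀ x : H, S (S x) = x) {α : Module.Dual F H}
    (hα : ∀ h, rcoad F H α h = ε h • α) (a b : H) : α (a * b) = α (b * a) := by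
  have h_invariant (x k : H) : α (adL F H x k) = ε x • α k := LinearMap.congr_fun (hα x) k
  calc α (a * b) = sweedler F a fun x y => ε x • α (b * y) := by
        rw [← sweedler_adL_mul hS, map_sweedler]
        simp only [h_invariant]
    _ = α (b * a) := sweedler_counit_left (fun y => α (b * y)) a

theorem IsHaarIntegral.rcoad_rcoad {l : H} (hl : IsHaarIntegral F l) (α : Module.Dual F H) (h : H) :
    rcoad F H (rcoad F H α l) h = ε h • rcoad F H α l := by
  rw [← rcoad_mul, hl.mul_right, rcoad, map_smul, comp_smul, rcoad]

end CoadjointAction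

/-- Let `H` be a finite-dimensional semisimple Hopf algebra over a field of
characteristic zero with Haar integral `ℓ`.  The invariants of the right coadjoint action of
`H` on `H*` are exactly the character algebra
`C(H) = {α ∈ H* : Δ(α) = Δ^op(α)} = {α : ∀ a b, α(a*b) = α(b*a)}`, and the map
`π_ad : α ↦ α ◁*_ad ℓ` is a projector onto `C(H)`. -/
theorem coadjoint_invariants_character_algebra
    [CharZero F] [FiniteDimensional F H] [IsSemisimpleRing H]
    (ℓ : H)
    (hL : ∀ h : H, h * ℓ = Coalgebra.counit (R := F) h • ℓ)
    (hR : ∀ h : H, ℓ * h = Coalgebra.counit (R := F) h • ℓ)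
    (hc : Coalgebra.counit (R := F) ℓ = 1) :
    ({α : Module.Dual F H | ∀ h : H, rcoad F H α h = Coalgebra.counit (R := F) h • α}
        = {α : Module.Dual F H | ∀ a b : H, α (a * b) = α (b * a)}) ∧
    (∀ α : Module.Dual F H, rcoad F H (rcoad F H α ℓ) ℓ = rcoad F H α ℓ) ∧
    (Set.range (fun α : Module.Dual F H => rcoad F H α ℓ)
        = {α : Module.Dual F H | ∀ a b : H, α (a * b) = α (b * a)}) := by
  have hℓ : IsHaarIntegral F ℓ := ⟨hL, hR, hc⟩
  have hS := hℓ.antipode_antipode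
  have h_invariants (α : Module.Dual F H) :
      (∀ h, rcoad F H α h = Coalgebra.counit (R := F) h • α) ↔ ∀ a b, α (a * b) = α (b * a) :=
    ⟨apply_mul_comm_of_rcoad_eq_counit_smul hS, rcoad_eq_counit_smul hS⟩
  refine ⟨Set.ext h_invariants, fun α => ?_, Set.ext fun α => ⟨?_, fun hα => ⟨α, ?_⟩⟩⟩
  · rw [hℓ.rcoad_rcoad, hc, one_smul]
  · rintro ⟨β, rfl⟩
    exact (h_invariants _).1 (hℓ.rcoad_rcoad β)
  · simpa [hc] using (h_invariants α).2 hα ℓ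

end
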